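/- Let p ∈ (1,∞), γ ∈ (0,1], and let λ be a finite positive Borel measure on the closed unit disc whose restriction to 𝔻 has the form dλ(ζ) = (1−|ζ|) dμ(ζ) for a positive Borel measure μ on 𝔻, and suppose there is M > 0 such that (∫₀^{2π} λ(C(φ,δ))^p dφ)^{1/p} ≤ M·δ^γ for all δ ∈ (0,1). For r ∈ (0,1) and φ ∈ ℝ define u₁(re^{iφ}) = ∫_{D*(re^{iφ},1/7)} log|(1−re^{iφ}·conj(ζ))/(re^{iφ}−ζ)| dμ(ζ). Then there is a constant C = C(p,γ) > 0, independent of λ and r, such that (∫₀^{2π} |u₁(re^{iφ})|^p dφ)^{1/p} ≤ C·M·(1−r)^{γ−1} for all r ∈ (1/2, 1). -/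

import Mathlib

open MeasureTheory Complex

/-- The Carleson box `C(φ,δ) = {ζ ∈ closure 𝔻 : |ζ| ≥ 1-δ, |arg ζ - φ| ≤ πδ}`
(the angular condition is expressed via a representative `θ` of the argument,
so that it is `2π`-periodic in `φ`). -/
noncomputable def carlesonBox (φ δ : ℝ) : Set ℂ :=
  {ζ : ℂ | ‖ζ‖ ≤ 1 ∧ 1 - δ ≤ ‖ζ‖ ∧
    ∃ θ : ℝ, |θ - φ| ≤ Real.pi * δ ∧
      ζ = (‖ζ‖ : ℂ) * Complex.exp (θ * Complex.I)}

/-- The pseudohyperbolic disc `D*(z,σ) = {ζ : |(z-ζ)/(1-z·conj ζ)| < σ}`. -/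
noncomputable def pseudoDisc (z : ℂ) (σ : ℝ) : Set ℂ :=
  {ζ : ℂ | ‖(z - ζ) / (1 - z * (starRingEnd ℂ) ζ)‖ < σ}

/-!
Fix `t = 1 - r`. Every `ζ` in the pseudohyperbolic disc around `z = re^{iφ}` has `1 - |ζ|`
comparable to `t`, so `μ` may be replaced there by `t⁻¹ λ`, and the disc lies in every Carleson box
`S = C(ψ, 4t/3)` whose centre satisfies `|φ - ψ| ≤ πt/2`. Since `(log Q)^p ≲ Q^{1/2}` for `Q ≥ 1`,
Hölder's inequality gives
`|u₁(z)|^p ≲ t^{1/2 - p} λ(S)^{p-1} ∫_S |z - ζ|^{-1/2} dλ(ζ)`.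
The singularity `|z - ζ|^{-1/2}` is integrable along circles, uniformly in `ζ`: integrating over an
arc of length `πt/2` and exchanging integrals yields `≲ t^{1-p} λ(S)^p`, for every centre `ψ` of `S`
in that arc. Averaging over `ψ` and adding up the arcs bounds `∫ |u₁|^p` by
`t^{-p} ∫ λ(C(ψ, 4t/3))^p dψ`.
-/

open Set
open scoped Real ENNReal ComplexConjugate

/-! ### Integral inequalities -/

lemma lintegral_rpow_le_measure_univ_rpow_mul {α : Type*} [MeasurableSpace α] {ν : Measure α}
    {f : α → ℝ≥0∞} (hf : Measurable f) {p : ℝ} (hp : 1 ≤ p) :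
    (∫⁻ x, f x ∂ν) ^ p ≤ ν univ ^ (p - 1) * ∫⁻ x, f x ^ p ∂ν := by
  have hp₀ : 0 < p := by linarith
  have h := eLpNorm'_le_eLpNorm'_mul_rpow_measure_univ one_pos hp
    (hf.aestronglyMeasurable (μ := ν))
  simp only [eLpNorm', enorm_eq_self, ENNReal.rpow_one, div_one] at h
  calc (∫⁻ x, f x ∂ν) ^ p
      ≤ ((∫⁻ x, f x ^ p ∂ν) ^ (1 / p) * ν univ ^ (1 - 1 / p)) ^ p := by gcongr
    _ = ν univ ^ (p - 1) * ∫⁻ x, f x ^ p ∂ν := by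
      rw [ENNReal.mul_rpow_of_nonneg _ _ hp₀.le, ← ENNReal.rpow_mul, ← ENNReal.rpow_mul,
        one_div_mul_cancel hp₀.ne', ENNReal.rpow_one, mul_comm, sub_mul, one_mul,
        one_div_mul_cancel hp₀.ne']

lemma setLIntegral_Ioc_le_of_forall_le_mul {f g : ℝ → ℝ≥0∞} {B : ℝ≥0∞} {h : ℝ} (hh : 0 < h)
    (hB : B ≠ ∞) {a : ℝ} (hfg : ∀ y ∈ Ioc a (a + h), ∫⁻ x in Ioc a (a + h), f x ≤ B * g y) :
    ∫⁻ x in Ioc a (a + h), f x ≤ ENNReal.ofReal h⁻¹ * B * ∫⁻ y in Ioc a (a + h), g y := by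
  set X := ∫⁻ x in Ioc a (a + h), f x
  have hX : X * ENNReal.ofReal h ≤ B * ∫⁻ y in Ioc a (a + h), g y := by
    calc X * ENNReal.ofReal h = ∫⁻ _ in Ioc a (a + h), X := by
          rw [setLIntegral_const, Real.volume_Ioc, add_sub_cancel_left]
      _ ≤ ∫⁻ y in Ioc a (a + h), B * g y := setLIntegral_mono' measurableSet_Ioc hfg
      _ = B * ∫⁻ y in Ioc a (a + h), g y := lintegral_const_mul' _ _ hB
  calc X = ENNReal.ofReal h⁻¹ * (X * ENNReal.ofReal h) := by
        rw [mul_left_comm, ← ENNReal.ofReal_mul (inv_nonneg.mpr hh.le), inv_mul_cancel₀ hh.ne',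
          ENNReal.ofReal_one, mul_one]
    _ ≤ ENNReal.ofReal h⁻¹ * (B * ∫⁻ y in Ioc a (a + h), g y) := by gcongr
    _ = ENNReal.ofReal h⁻¹ * B * ∫⁻ y in Ioc a (a + h), g y := (mul_assoc _ _ _).symm

lemma setLIntegral_Ioc_nat_mul_le {f g : ℝ → ℝ≥0∞} {K : ℝ≥0∞} {h : ℝ} (hh : 0 ≤ h)
    (hfg : ∀ a, ∫⁻ x in Ioc a (a + h), f x ≤ K * ∫⁻ x in Ioc a (a + h), g x) (n : ℕ) :
    ∫⁻ x in Ioc 0 (n * h), f x ≤ K * ∫⁻ x in Ioc 0 (n * h), g x := by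
  induction n with
  | zero => simp
  | succ n ih =>
    have hdisj : Disjoint (Ioc 0 (n * h)) (Ioc (n * h) (n * h + h)) :=
      Ioc_disjoint_Ioc_of_le le_rfl
    rw [Nat.cast_succ, add_one_mul,
      ← Ioc_union_Ioc_eq_Ioc (b := n * h) (by positivity) (by linarith),
      lintegral_union measurableSet_Ioc hdisj, lintegral_union measurableSet_Ioc hdisj, mul_add]
    exact add_le_add ih (hfg _)

lemma setLIntegral_Ioc_zero_le_of_forall_sub_le {f g : ℝ → ℝ≥0∞} {B : ℝ≥0∞} {h L : ℝ} (hh : 0 < h)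
    (hL : h ≤ L) (hB : B ≠ ∞) (hfg : ∀ a b, a ≤ b → b - a ≤ h → ∀ y ∈ Ioc a b,
      ∫⁻ x in Ioc a b, f x ≤ B * g y) :
    ∫⁻ x in Ioc 0 L, f x ≤ ENNReal.ofReal (2 / h) * B * ∫⁻ x in Ioc 0 L, g x := by
  have hL₀ : 0 < L := hh.trans_le hL
  set n := ⌈L / h⌉₊
  have hn : 0 < (n : ℝ) := Nat.cast_pos.mpr (Nat.ceil_pos.mpr (by positivity))
  have hn_ge : L / n ≤ h := div_le_comm₀ hh hn |>.mp (Nat.le_ceil _)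
  have hn_le : (L / n)⁻¹ ≤ 2 / h := by
    have h_ceil : (n : ℝ) ≤ 2 * (L / h) := by
      have := (Nat.ceil_lt_add_one (a := L / h) (by positivity)).le
      have := (one_le_div hh).mpr hL
      linarith
    rw [inv_div, div_le_iff₀ hL₀]
    exact h_ceil.trans_eq (by ring)
  have hstep (a : ℝ) : ∫⁻ x in Ioc a (a + L / n), f x ≤
      ENNReal.ofReal (2 / h) * B * ∫⁻ x in Ioc a (a + L / n), g x := by
    refine (setLIntegral_Ioc_le_of_forall_le_mul (by positivity) hB
      (hfg a _ (by simpa using by positivity) (by simpa using hn_ge))).trans ?_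
    gcongr
  simpa [mul_div_cancel₀ L hn.ne'] using setLIntegral_Ioc_nat_mul_le (by positivity) hstep n

lemma lintegral_Ioc_zero_enorm_rpow_neg {s ℓ : ℝ} (hs : s < 1) (hℓ : 0 ≤ ℓ) :
    ∫⁻ x in Ioc 0 ℓ, ‖x‖ₑ ^ (-s) = ENNReal.ofReal (ℓ ^ (1 - s) / (1 - s)) := by
  have hint : IntervalIntegrable (fun x : ℝ ↦ x ^ (-s)) volume 0 ℓ :=
    intervalIntegral.intervalIntegrable_rpow' (by linarith)
  have hval : ∫ x in (0 : ℝ)..ℓ, x ^ (-s) = ℓ ^ (1 - s) / (1 - s) := by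
    rw [integral_rpow (Or.inl (by linarith)), neg_add_eq_sub, Real.zero_rpow (by linarith),
      sub_zero]
  rw [← hval, intervalIntegral.integral_of_le hℓ, ofReal_integral_eq_lintegral_ofReal
    ((intervalIntegrable_iff_integrableOn_Ioc_of_le hℓ).mp hint)]
  · refine setLIntegral_congr_fun measurableSet_Ioc fun x hx ↦ ?_
    rw [Real.enorm_of_nonneg hx.1.le, ENNReal.ofReal_rpow_of_pos hx.1]
  · filter_upwards [ae_restrict_mem measurableSet_Ioc] with x hx
    exact Real.rpow_nonneg hx.1.le _

lemma lintegral_Ioc_enorm_sub_rpow_neg_le {s a b c : ℝ} (hs : s < 1) (hc : c ∈ Icc a b) :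
    ∫⁻ x in Ioc a b, ‖x - c‖ₑ ^ (-s) ≤
      ENNReal.ofReal (2 / (1 - s) * (b - a) ^ (1 - s)) := by
  set ℓ := b - a
  have hℓ : 0 ≤ ℓ := sub_nonneg.mpr (hc.1.trans hc.2)
  have hmeas : Measurable fun x : ℝ ↦ ‖x‖ₑ ^ (-s) := by fun_prop
  have hright : ∫⁻ x in Ioc c (c + ℓ), ‖x - c‖ₑ ^ (-s) =
      ENNReal.ofReal (ℓ ^ (1 - s) / (1 - s)) := by
    rw [← lintegral_Ioc_zero_enorm_rpow_neg hs hℓ,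
      ← (measurePreserving_sub_right volume c).setLIntegral_comp_preimage measurableSet_Ioc hmeas]
    simp [add_comm]
  have hleft : ∫⁻ x in Ico (c - ℓ) c, ‖x - c‖ₑ ^ (-s) =
      ENNReal.ofReal (ℓ ^ (1 - s) / (1 - s)) := by
    rw [← lintegral_Ioc_zero_enorm_rpow_neg hs hℓ,
      ← (Measure.measurePreserving_sub_left volume c).setLIntegral_comp_preimage
        measurableSet_Ioc hmeas]
    simp [enorm_sub_rev]
  have hcover : Ioc a b ⊆ Icc (c - ℓ) (c + ℓ) := fun x hx ↦
    ⟨by linarith [hx.1, hc.2, show ℓ = b - a from rfl],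
      by linarith [hx.2, hc.1, show ℓ = b - a from rfl]⟩
  calc ∫⁻ x in Ioc a b, ‖x - c‖ₑ ^ (-s)
      ≤ ∫⁻ x in Icc (c - ℓ) (c + ℓ), ‖x - c‖ₑ ^ (-s) := lintegral_mono_set hcover
    _ = ∫⁻ x in Ico (c - ℓ) c ∪ Ioc c (c + ℓ), ‖x - c‖ₑ ^ (-s) := by
      rw [← Icc_union_Ioc_eq_Icc (b := c) (by linarith) (by linarith)]
      exact setLIntegral_congr (Ico_ae_eq_Icc.symm.union ae_eq_rfl)
    _ ≤ (∫⁻ x in Ico (c - ℓ) c, ‖x - c‖ₑ ^ (-s)) + ∫⁻ x in Ioc c (c + ℓ), ‖x - c‖ₑ ^ (-s) :=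
      lintegral_union_le _ _ _
    _ = ENNReal.ofReal (2 / (1 - s) * ℓ ^ (1 - s)) := by
      have : 0 ≤ ℓ ^ (1 - s) / (1 - s) := div_nonneg (by positivity) (by linarith)
      rw [hleft, hright, ← ENNReal.ofReal_add this this]
      ring_nf

lemma log_rpow_le_mul_rpow {x p s : ℝ} (hx : 1 ≤ x) (hp : 0 < p) (hs : 0 < s) :
    Real.log x ^ p ≤ (p / s) ^ p * x ^ s := by
  have hx₀ : 0 ≤ x := by linarith
  have hlog := Real.log_nonneg hx
  calc Real.log x ^ p ≤ (x ^ (s / p) / (s / p)) ^ p := by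
        gcongr; exact Real.log_le_rpow_div hx₀ (by positivity)
    _ = (p / s) ^ p * x ^ s := by
      rw [div_div_eq_mul_div, mul_div_assoc, mul_comm,
        Real.mul_rpow (by positivity) (by positivity), ← Real.rpow_mul hx₀,
        div_mul_cancel₀ _ hp.ne']

lemma ofReal_intervalIntegral_abs_rpow_le {f : ℝ → ℝ} {a b p : ℝ} (hab : a ≤ b) (hp : 0 ≤ p) :
    ENNReal.ofReal (∫ x in a..b, |f x| ^ p) ≤ ∫⁻ x in Ioc a b, ‖f x‖ₑ ^ p := by
  rw [intervalIntegral.integral_of_le hab]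
  calc ENNReal.ofReal (∫ x in Ioc a b, |f x| ^ p) ≤ ∫⁻ x in Ioc a b, ‖|f x| ^ p‖ₑ :=
        (Real.ofReal_le_enorm _).trans (enorm_integral_le_lintegral_enorm _)
    _ = ∫⁻ x in Ioc a b, ‖f x‖ₑ ^ p := by
      refine lintegral_congr fun x ↦ ?_
      rw [Real.enorm_rpow_of_nonneg (abs_nonneg _) hp, Real.enorm_abs]

lemma lintegral_rpow_eq_ofReal_intervalIntegral {f : ℝ → ℝ≥0∞} {c : ℝ≥0∞} {a b p : ℝ}
    (hf : Measurable f) (hc : c ≠ ∞) (hfc : ∀ x, f x ≤ c) (hab : a ≤ b) (hp : 0 ≤ p) :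
    ∫⁻ x in Ioc a b, f x ^ p = ENNReal.ofReal (∫ x in a..b, (f x).toReal ^ p) := by
  have hint : IntegrableOn (fun x ↦ (f x).toReal ^ p) (Ioc a b) := by
    refine Measure.integrableOn_of_bounded (M := c.toReal ^ p) measure_Ioc_lt_top.ne
      (hf.ennreal_toReal.pow_const p).aestronglyMeasurable (.of_forall fun x ↦ ?_)
    rw [Real.norm_of_nonneg (by positivity)]
    gcongr
    exact hfc x
  rw [intervalIntegral.integral_of_le hab, ofReal_integral_eq_lintegral_ofReal hint
    (.of_forall fun x ↦ by positivity)]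
  refine lintegral_congr fun x ↦ ?_
  rw [← ENNReal.ofReal_rpow_of_nonneg ENNReal.toReal_nonneg hp,
    ENNReal.ofReal_toReal (ne_top_of_le_ne_top hc (hfc x))]

section Geometry

/-! ### Carleson boxes and pseudohyperbolic discs -/

variable {z ζ : ℂ} {σ r φ ψ δ : ℝ}

lemma norm_ofReal_mul_exp_mul_I (hr : 0 ≤ r) (φ : ℝ) : ‖(r : ℂ) * exp (φ * I)‖ = r := by
  rw [norm_mul, norm_exp_ofReal_mul_I, mul_one, norm_real, Real.norm_of_nonneg hr]

lemma norm_mul_exp_neg_mul_I (ζ : ℂ) (φ : ℝ) : ‖ζ * exp (-(φ * I))‖ = ‖ζ‖ := by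
  rw [norm_mul, ← neg_mul, ← ofReal_neg, norm_exp_ofReal_mul_I, mul_one]

lemma eq_norm_mul_exp_arg_add (ζ : ℂ) (φ : ℝ) :
    ζ = ‖ζ‖ * exp ((arg (ζ * exp (-(φ * I))) + φ : ℝ) * I) := by
  have h := norm_mul_exp_arg_mul_I (ζ * exp (-(φ * I)))
  rw [norm_mul_exp_neg_mul_I] at h
  rw [ofReal_add, add_mul, exp_add, ← mul_assoc, h, mul_assoc, ← exp_add, neg_add_cancel, exp_zero,
    mul_one]

lemma mem_carlesonBox_of_abs_arg_add_le (hζ : ‖ζ‖ ≤ 1) (hδ : 1 - δ ≤ ‖ζ‖)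
    (h : |arg (ζ * exp (-(φ * I)))| + |φ - ψ| ≤ π * δ) : ζ ∈ carlesonBox ψ δ := by
  refine ⟨hζ, hδ, arg (ζ * exp (-(φ * I))) + φ, ?_, eq_norm_mul_exp_arg_add ζ φ⟩
  rw [add_sub_assoc]
  exact (abs_add_le _ _).trans h

lemma mem_carlesonBox_iff (hδ : δ < 1) :
    ζ ∈ carlesonBox φ δ ↔ ‖ζ‖ ≤ 1 ∧ 1 - δ ≤ ‖ζ‖ ∧ |arg (ζ * exp (-(φ * I)))| ≤ π * δ := by
  refine ⟨fun ⟨h₁, h₂, θ, hθ, hζ⟩ ↦ ⟨h₁, h₂, ?_⟩, fun ⟨h₁, h₂, h₃⟩ ↦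
    mem_carlesonBox_of_abs_arg_add_le (φ := φ) h₁ h₂ (by simpa using h₃)⟩
  have hpos : 0 < ‖ζ‖ := by linarith
  have hlt : |θ - φ| < π := hθ.trans_lt (mul_lt_of_lt_one_right Real.pi_pos hδ)
  have hrot : ζ * exp (-(φ * I)) = ‖ζ‖ * exp ((θ - φ : ℝ) * I) := by
    conv_lhs => rw [hζ]
    rw [mul_assoc, ← exp_add, ofReal_sub, sub_mul, sub_eq_add_neg]
  rwa [hrot, arg_real_mul _ hpos, arg_exp_mul_I, (toIocMod_eq_self _).mpr]
  exact ⟨(abs_lt.mp hlt).1, by linarith [(abs_lt.mp hlt).2]⟩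

lemma measurableSet_setOf_mem_carlesonBox (hδ : δ < 1) :
    MeasurableSet {x : ℝ × ℂ | x.2 ∈ carlesonBox x.1 δ} := by
  have harg : Measurable fun x : ℝ × ℂ ↦ |arg (x.2 * exp (-(x.1 * I)))| :=
    (measurable_arg.comp (by fun_prop)).abs
  have hset : {x : ℝ × ℂ | x.2 ∈ carlesonBox x.1 δ} = {x | ‖x.2‖ ≤ 1} ∩
      ({x | 1 - δ ≤ ‖x.2‖} ∩ {x | |arg (x.2 * exp (-(x.1 * I)))| ≤ π * δ}) :=
    Set.ext fun _ ↦ mem_carlesonBox_iff hδ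
  rw [hset]
  exact (measurableSet_le (by fun_prop) (by fun_prop)).inter
    ((measurableSet_le (by fun_prop) (by fun_prop)).inter (measurableSet_le harg (by fun_prop)))

lemma measurable_measure_carlesonBox (hδ : δ < 1) (lam : Measure ℂ) [SFinite lam] :
    Measurable fun ψ ↦ lam (carlesonBox ψ δ) :=
  measurable_measure_prodMk_left (measurableSet_setOf_mem_carlesonBox hδ)

lemma abs_arg_le_of_norm_ofReal_sub_le {w : ℂ} {ε : ℝ} (hε : ε < r) (h : ‖(r : ℂ) - w‖ ≤ ε) :
    |arg w| ≤ π / 2 * (ε / (r - ε)) := by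
  have hε₀ : 0 ≤ ε := (norm_nonneg _).trans h
  have hre : r - ε ≤ w.re := by
    have := (re_le_norm _).trans h
    simp only [sub_re, ofReal_re] at this
    linarith
  have him : |w.im| ≤ ε := by simpa using (abs_im_le_norm ((r : ℂ) - w)).trans h
  have hsin : 2 / π * |arg w| ≤ ε / (r - ε) := by
    calc 2 / π * |arg w| ≤ |Real.sin (arg w)| :=
          Real.mul_abs_le_abs_sin (abs_arg_le_pi_div_two_iff.mpr (by linarith))
      _ = |w.im| / ‖w‖ := by rw [sin_arg, abs_div, abs_norm]
      _ ≤ ε / (r - ε) := div_le_div₀ hε₀ him (by linarith) (hre.trans (re_le_norm w))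
  calc |arg w| = π / 2 * (2 / π * |arg w|) := by field_simp
    _ ≤ π / 2 * (ε / (r - ε)) := by gcongr

lemma mem_carlesonBox_of_norm_sub_le (hr : 1 / 2 < r) (hζ : ‖ζ‖ ≤ 1)
    (h : ‖(r : ℂ) * exp (φ * I) - ζ‖ ≤ (1 - r) / 3) (hψ : |φ - ψ| ≤ π * (1 - r) / 2) :
    ζ ∈ carlesonBox ψ (4 / 3 * (1 - r)) := by
  have hr₁ : 0 ≤ 1 - r := by linarith [(norm_nonneg _).trans h]
  have hnorm : r - (1 - r) / 3 ≤ ‖ζ‖ := by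
    have := (norm_sub_norm_le _ _).trans h
    rw [norm_ofReal_mul_exp_mul_I (by linarith)] at this
    linarith
  have hrot : ‖(r : ℂ) - ζ * exp (-(φ * I))‖ ≤ (1 - r) / 3 := by
    rw [← norm_mul_exp_neg_mul_I _ φ, sub_mul, mul_assoc, ← exp_add, add_neg_cancel, exp_zero,
      mul_one] at h
    exact h
  have harg : |arg (ζ * exp (-(φ * I)))| ≤ π / 2 * (1 - r) := by
    refine (abs_arg_le_of_norm_ofReal_sub_le (by linarith) hrot).trans ?_
    gcongr
    rw [div_le_iff₀ (by linarith)]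
    nlinarith
  have hpi : 0 ≤ π * (1 - r) := by positivity
  exact mem_carlesonBox_of_abs_arg_add_le (φ := φ) hζ (by linarith) (by linarith)

lemma norm_sub_lt_of_mem_pseudoDisc (h : ζ ∈ pseudoDisc z σ) (hne : 1 - z * conj ζ ≠ 0) :
    ‖z - ζ‖ < σ * ‖1 - z * conj ζ‖ := by
  rw [← div_lt_iff₀ (norm_pos_iff.mpr hne), ← norm_div]
  exact h

lemma measurableSet_pseudoDisc (z : ℂ) (σ : ℝ) : MeasurableSet (pseudoDisc z σ) := by
  have := continuous_conj
  exact measurableSet_lt (by fun_prop) (by fun_prop)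

lemma norm_one_sub_mul_conj_sq_sub_norm_sub_sq (z ζ : ℂ) :
    ‖1 - z * conj ζ‖ ^ 2 - ‖z - ζ‖ ^ 2 = (1 - ‖z‖ ^ 2) * (1 - ‖ζ‖ ^ 2) := by
  simp only [← normSq_eq_norm_sq, normSq_apply, sub_re, sub_im, mul_re, mul_im, conj_re, conj_im,
    one_re, one_im]
  ring

lemma one_sub_mul_conj_ne_zero (hz : ‖z‖ < 1) (hζ : ‖ζ‖ ≤ 1) : 1 - z * conj ζ ≠ 0 := by
  intro h
  have hnorm : ‖z‖ * ‖ζ‖ = 1 := by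
    rw [← norm_conj ζ, ← norm_mul, ← sub_eq_zero.mp h, norm_one]
  nlinarith [norm_nonneg z, norm_nonneg ζ]

lemma one_sub_mul_conj_eq_zero_of_mem_pseudoDisc (hz : ‖z‖ ≤ 1) (hζ : 1 ≤ ‖ζ‖) (hσ : σ ≤ 1)
    (h : ζ ∈ pseudoDisc z σ) : 1 - z * conj ζ = 0 := by
  by_contra hne
  have hlt : ‖z - ζ‖ < ‖1 - z * conj ζ‖ :=
    (norm_sub_lt_of_mem_pseudoDisc h hne).trans_le (mul_le_of_le_one_left (norm_nonneg _) hσ)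
  have hsq : ‖1 - z * conj ζ‖ ^ 2 ≤ ‖z - ζ‖ ^ 2 := by
    rw [← sub_nonpos, norm_one_sub_mul_conj_sq_sub_norm_sub_sq]
    exact mul_nonpos_of_nonneg_of_nonpos
      (sub_nonneg.mpr (pow_le_one₀ (norm_nonneg _) hz)) (sub_nonpos.mpr (one_le_pow₀ hζ))
  exact hlt.not_ge ((sq_le_sq₀ (norm_nonneg _) (norm_nonneg _)).mp hsq)

lemma norm_one_sub_mul_conj_le_of_mem_pseudoDisc (hz : ‖z‖ < 1) (hζ : ‖ζ‖ ≤ 1) (hσ : σ < 1)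
    (h : ζ ∈ pseudoDisc z σ) : ‖1 - z * conj ζ‖ ≤ 2 / (1 - σ) * (1 - ‖z‖) := by
  have hlt := norm_sub_lt_of_mem_pseudoDisc h (one_sub_mul_conj_ne_zero hz hζ)
  have htri : ‖1 - z * conj ζ‖ ≤ (1 - ‖z‖ ^ 2) + ‖z‖ * ‖z - ζ‖ := by
    have hsq : (0 : ℝ) ≤ 1 - ‖z‖ ^ 2 := sub_nonneg.mpr (pow_le_one₀ (norm_nonneg _) hz.le)
    calc ‖1 - z * conj ζ‖ = ‖((1 - ‖z‖ ^ 2 : ℝ) : ℂ) + z * conj (z - ζ)‖ := by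
          rw [map_sub, mul_sub, mul_conj, normSq_eq_norm_sq]
          push_cast
          ring_nf
      _ ≤ (1 - ‖z‖ ^ 2) + ‖z‖ * ‖z - ζ‖ := by
        refine (norm_add_le _ _).trans_eq ?_
        rw [norm_mul, norm_conj, norm_real, Real.norm_of_nonneg hsq]
  rw [div_mul_eq_mul_div, le_div_iff₀ (by linarith)]
  nlinarith [norm_nonneg (z - ζ), norm_nonneg z]

lemma norm_sub_le_of_mem_pseudoDisc (hz : ‖z‖ < 1) (hζ : ‖ζ‖ ≤ 1) (hσ₀ : 0 ≤ σ) (hσ : σ < 1)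
    (h : ζ ∈ pseudoDisc z σ) : ‖z - ζ‖ ≤ 2 * σ / (1 - σ) * (1 - ‖z‖) := by
  calc ‖z - ζ‖ ≤ σ * ‖1 - z * conj ζ‖ :=
        (norm_sub_lt_of_mem_pseudoDisc h (one_sub_mul_conj_ne_zero hz hζ)).le
    _ ≤ σ * (2 / (1 - σ) * (1 - ‖z‖)) := by
      gcongr; exact norm_one_sub_mul_conj_le_of_mem_pseudoDisc hz hζ hσ h
    _ = 2 * σ / (1 - σ) * (1 - ‖z‖) := by ring

lemma mul_le_one_sub_norm_of_mem_pseudoDisc (hz : ‖z‖ < 1) (hζ : ‖ζ‖ ≤ 1) (hσ₀ : 0 ≤ σ) (hσ : σ ≤ 1)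
    (h : ζ ∈ pseudoDisc z σ) : (1 - σ ^ 2) / 4 * (1 - ‖z‖) ≤ 1 - ‖ζ‖ := by
  have hz₀ : 0 < 1 - ‖z‖ := sub_pos.mpr hz
  have hσ₂ : 0 ≤ 1 - σ ^ 2 := sub_nonneg.mpr (pow_le_one₀ hσ₀ hσ)
  have hd : 1 - ‖z‖ ≤ ‖1 - z * conj ζ‖ := by
    calc 1 - ‖z‖ ≤ ‖(1 : ℂ)‖ - ‖z * conj ζ‖ := by
          rw [norm_one, norm_mul, norm_conj]
          gcongr
          exact mul_le_of_le_one_right (norm_nonneg _) hζ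
      _ ≤ ‖1 - z * conj ζ‖ := norm_sub_norm_le _ _
  have hlt : ‖z - ζ‖ ^ 2 ≤ σ ^ 2 * ‖1 - z * conj ζ‖ ^ 2 := by
    rw [← mul_pow]
    gcongr
    exact (norm_sub_lt_of_mem_pseudoDisc h (one_sub_mul_conj_ne_zero hz hζ)).le
  have hprod : (1 - σ ^ 2) * (1 - ‖z‖) ^ 2 ≤ (1 - ‖z‖) * (4 * (1 - ‖ζ‖)) := by
    calc (1 - σ ^ 2) * (1 - ‖z‖) ^ 2 ≤ (1 - σ ^ 2) * ‖1 - z * conj ζ‖ ^ 2 := by gcongr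
      _ ≤ (1 - ‖z‖ ^ 2) * (1 - ‖ζ‖ ^ 2) := by
        rw [← norm_one_sub_mul_conj_sq_sub_norm_sub_sq]; linarith
      _ = (1 - ‖z‖) * (1 - ‖ζ‖) * ((1 + ‖z‖) * (1 + ‖ζ‖)) := by ring
      _ ≤ (1 - ‖z‖) * (1 - ‖ζ‖) * ((1 + 1) * (1 + 1)) := by
        have := sub_nonneg.mpr hζ
        gcongr
      _ = (1 - ‖z‖) * (4 * (1 - ‖ζ‖)) := by ring
  rw [sq (1 - ‖z‖), mul_left_comm] at hprod
  linarith [le_of_mul_le_mul_left hprod hz₀]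

lemma pseudoDisc_inter_ball_subset_carlesonBox (hr : 1 / 2 < r) (hr₁ : r < 1)
    (hψ : |φ - ψ| ≤ π * (1 - r) / 2) :
    pseudoDisc (r * exp (φ * I)) (1 / 7) ∩ Metric.ball 0 1 ⊆
      carlesonBox ψ (4 / 3 * (1 - r)) := by
  rintro ζ ⟨hζ, hball⟩
  have hz := norm_ofReal_mul_exp_mul_I (by linarith : 0 ≤ r) φ
  have hζ₁ : ‖ζ‖ ≤ 1 := (mem_ball_zero_iff.mp hball).le
  have hdist := norm_sub_le_of_mem_pseudoDisc (by rwa [hz]) hζ₁ (by norm_num) (by norm_num) hζ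
  exact mem_carlesonBox_of_norm_sub_le hr hζ₁ (hdist.trans_eq (by rw [hz]; ring)) hψ

end Geometry

section GreenPotential

/-! ### Green potentials over pseudohyperbolic discs -/

variable {μ lam : Measure ℂ} {z ζ : ℂ} {σ r a b p s : ℝ}

/-- The Green function of the unit disc, with pole `z`. At the pole its value is `0`. -/
noncomputable def discGreen (z ζ : ℂ) : ℝ := Real.log ‖(1 - z * conj ζ) / (z - ζ)‖

/-- The part of the Green potential of `μ` at `z` that comes from the pseudohyperbolic disc of
centre `z` and radius `σ`; the function `u₁` of the theorem is the case `σ = 1 / 7`. -/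
noncomputable def localGreenPotential (μ : Measure ℂ) (σ : ℝ) (z : ℂ) : ℝ :=
  ∫ ζ in pseudoDisc z σ, discGreen z ζ ∂μ

/-- The relation `dλ(ζ) = (1 - |ζ|) dμ(ζ)` on the open unit disc. Nothing is said about either
measure outside the disc. -/
def IsDiscWeighted (μ lam : Measure ℂ) : Prop :=
  ∀ E : Set ℂ, MeasurableSet E → E ⊆ Metric.ball 0 1 →
    lam E = ∫⁻ ζ in E, ENNReal.ofReal (1 - ‖ζ‖) ∂μ

lemma measurable_discGreen (z : ℂ) : Measurable (discGreen z) := by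
  have := continuous_conj
  unfold discGreen
  fun_prop

lemma discGreen_eq_zero_of_mem_pseudoDisc (hz : ‖z‖ ≤ 1) (hζ : 1 ≤ ‖ζ‖) (hσ : σ ≤ 1)
    (h : ζ ∈ pseudoDisc z σ) : discGreen z ζ = 0 := by
  rw [discGreen, one_sub_mul_conj_eq_zero_of_mem_pseudoDisc hz hζ hσ h, zero_div, norm_zero,
    Real.log_zero]

lemma IsDiscWeighted.restrict_le_smul (h : IsDiscWeighted μ lam) {E : Set ℂ}
    (hE : MeasurableSet E) (hE_ball : E ⊆ Metric.ball 0 1) {c : ℝ} (hc : 0 < c)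
    (hcE : ∀ ζ ∈ E, c ≤ 1 - ‖ζ‖) :
    μ.restrict E ≤ ENNReal.ofReal c⁻¹ • lam.restrict E := by
  refine Measure.le_intro fun A hA _ ↦ ?_
  have hAE : MeasurableSet (A ∩ E) := hA.inter hE
  have hle : ENNReal.ofReal c * μ (A ∩ E) ≤ lam (A ∩ E) := by
    rw [h _ hAE (inter_subset_right.trans hE_ball), ← setLIntegral_const]
    exact setLIntegral_mono' hAE fun ζ hζ ↦ ENNReal.ofReal_le_ofReal (hcE ζ hζ.2)
  rw [Measure.smul_apply, Measure.restrict_apply hA, Measure.restrict_apply hA, smul_eq_mul]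
  calc μ (A ∩ E) = ENNReal.ofReal c⁻¹ * (ENNReal.ofReal c * μ (A ∩ E)) := by
        rw [← mul_assoc, ← ENNReal.ofReal_mul (inv_nonneg.mpr hc.le), inv_mul_cancel₀ hc.ne',
          ENNReal.ofReal_one, one_mul]
    _ ≤ ENNReal.ofReal c⁻¹ * lam (A ∩ E) := by gcongr

lemma enorm_localGreenPotential_le (h : IsDiscWeighted μ lam) (hz : ‖z‖ < 1) (hσ₀ : 0 ≤ σ)
    (hσ : σ < 1) :
    ‖localGreenPotential μ σ z‖ₑ ≤ ENNReal.ofReal (4 / ((1 - σ ^ 2) * (1 - ‖z‖))) *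
      ∫⁻ ζ in pseudoDisc z σ ∩ Metric.ball 0 1, ‖discGreen z ζ‖ₑ ∂lam := by
  set E := pseudoDisc z σ ∩ Metric.ball 0 1
  have hE : MeasurableSet E := (measurableSet_pseudoDisc z σ).inter measurableSet_ball
  have hc : 0 < (1 - σ ^ 2) / 4 * (1 - ‖z‖) :=
    mul_pos (div_pos (sub_pos.mpr (pow_lt_one₀ hσ₀ hσ two_ne_zero)) four_pos) (sub_pos.mpr hz)
  have hcE : ∀ ζ ∈ E, (1 - σ ^ 2) / 4 * (1 - ‖z‖) ≤ 1 - ‖ζ‖ := fun ζ hζ ↦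
    mul_le_one_sub_norm_of_mem_pseudoDisc hz (mem_ball_zero_iff.mp hζ.2).le hσ₀ hσ.le hζ.1
  -- Outside `𝔻` the disc contains at most the point `1 / conj z`, which the convention `x / 0 = 0`
  -- lets in; there the logarithm is `Real.log 0 = 0`.
  have hout : ∫⁻ ζ in pseudoDisc z σ \ Metric.ball 0 1, ‖discGreen z ζ‖ₑ ∂μ = 0 := by
    refine setLIntegral_eq_zero ((measurableSet_pseudoDisc z σ).diff measurableSet_ball)
      fun ζ hζ ↦ ?_
    have hζ₁ : 1 ≤ ‖ζ‖ := by simpa using hζ.2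
    simp [discGreen_eq_zero_of_mem_pseudoDisc hz.le hζ₁ hσ.le hζ.1]
  calc ‖localGreenPotential μ σ z‖ₑ ≤ ∫⁻ ζ in pseudoDisc z σ, ‖discGreen z ζ‖ₑ ∂μ :=
        enorm_integral_le_lintegral_enorm _
    _ = ∫⁻ ζ in E, ‖discGreen z ζ‖ₑ ∂μ := by
        rw [← lintegral_inter_add_sdiff _ _ measurableSet_ball, hout, add_zero]
    _ ≤ ∫⁻ ζ, ‖discGreen z ζ‖ₑ ∂(ENNReal.ofReal ((1 - σ ^ 2) / 4 * (1 - ‖z‖))⁻¹ •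
          lam.restrict E) :=
        lintegral_mono' (h.restrict_le_smul hE inter_subset_right hc hcE) le_rfl
    _ = _ := by
        rw [lintegral_smul_measure, smul_eq_mul, div_mul_eq_mul_div, inv_div]

lemma enorm_discGreen_rpow_le {D : ℝ} (hp : 0 < p) (hs : 0 < s)
    (h : ‖z - ζ‖ ≤ ‖1 - z * conj ζ‖) (hD : ‖1 - z * conj ζ‖ ≤ D) :
    ‖discGreen z ζ‖ₑ ^ p ≤ ENNReal.ofReal ((p / s) ^ p * D ^ s) * ‖z - ζ‖ₑ ^ (-s) := by
  obtain rfl | hne := eq_or_ne z ζ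
  · simp [discGreen, hp]
  have hpos : 0 < ‖z - ζ‖ := norm_pos_iff.mpr (sub_ne_zero.mpr hne)
  have hD₀ : 0 ≤ D := (norm_nonneg _).trans hD
  have hQ : 1 ≤ ‖(1 - z * conj ζ) / (z - ζ)‖ := by
    rwa [norm_div, one_le_div hpos]
  have hlog : 0 ≤ discGreen z ζ := Real.log_nonneg hQ
  rw [Real.enorm_of_nonneg hlog, ENNReal.ofReal_rpow_of_nonneg hlog hp.le, ← ofReal_norm (z - ζ),
    ENNReal.ofReal_rpow_of_pos hpos, ← ENNReal.ofReal_mul (by positivity)]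
  refine ENNReal.ofReal_le_ofReal ?_
  calc discGreen z ζ ^ p ≤ (p / s) ^ p * ‖(1 - z * conj ζ) / (z - ζ)‖ ^ s :=
        log_rpow_le_mul_rpow hQ hp hs
    _ ≤ (p / s) ^ p * (D / ‖z - ζ‖) ^ s := by rw [norm_div]; gcongr
    _ = (p / s) ^ p * D ^ s * ‖z - ζ‖ ^ (-s) := by
        rw [Real.div_rpow hD₀ hpos.le, Real.rpow_neg hpos.le, ← div_eq_mul_inv, mul_div_assoc]

lemma enorm_localGreenPotential_rpow_le (h : IsDiscWeighted μ lam) (hz : ‖z‖ < 1) (hσ₀ : 0 ≤ σ)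
    (hσ : σ < 1) (hp : 1 ≤ p) (hs : 0 < s) {S : Set ℂ}
    (hS : pseudoDisc z σ ∩ Metric.ball 0 1 ⊆ S) :
    ‖localGreenPotential μ σ z‖ₑ ^ p ≤
      ENNReal.ofReal ((4 / ((1 - σ ^ 2) * (1 - ‖z‖))) ^ p *
        ((p / s) ^ p * (2 / (1 - σ) * (1 - ‖z‖)) ^ s)) *
      (lam S ^ (p - 1) * ∫⁻ ζ in S, ‖z - ζ‖ₑ ^ (-s) ∂lam) := by
  have hp₀ : 0 < p := by linarith
  have := sub_pos.mpr hz
  have hσ₂ : 0 < 1 - σ ^ 2 := sub_pos.mpr (pow_lt_one₀ hσ₀ hσ two_ne_zero)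
  set A := 4 / ((1 - σ ^ 2) * (1 - ‖z‖))
  set B := (p / s) ^ p * (2 / (1 - σ) * (1 - ‖z‖)) ^ s
  set E := pseudoDisc z σ ∩ Metric.ball 0 1
  have hA : 0 ≤ A := by positivity
  have hpt : ∀ ζ ∈ E, ‖discGreen z ζ‖ₑ ^ p ≤ ENNReal.ofReal B * ‖z - ζ‖ₑ ^ (-s) := fun ζ hζ ↦ by
    have hζ₁ : ‖ζ‖ ≤ 1 := (mem_ball_zero_iff.mp hζ.2).le
    refine enorm_discGreen_rpow_le hp₀ hs ?_
      (norm_one_sub_mul_conj_le_of_mem_pseudoDisc hz hζ₁ hσ hζ.1)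
    exact (norm_sub_lt_of_mem_pseudoDisc hζ.1 (one_sub_mul_conj_ne_zero hz hζ₁)).le.trans
      (mul_le_of_le_one_left (norm_nonneg _) hσ.le)
  have hE : MeasurableSet E := (measurableSet_pseudoDisc z σ).inter measurableSet_ball
  calc ‖localGreenPotential μ σ z‖ₑ ^ p
      ≤ (ENNReal.ofReal A * ∫⁻ ζ in E, ‖discGreen z ζ‖ₑ ∂lam) ^ p := by
        gcongr; exact enorm_localGreenPotential_le h hz hσ₀ hσ
    _ ≤ ENNReal.ofReal (A ^ p) * (lam E ^ (p - 1) * ∫⁻ ζ in E, ‖discGreen z ζ‖ₑ ^ p ∂lam) := by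
        rw [ENNReal.mul_rpow_of_nonneg _ _ hp₀.le, ENNReal.ofReal_rpow_of_nonneg hA hp₀.le]
        gcongr
        simpa using lintegral_rpow_le_measure_univ_rpow_mul (ν := lam.restrict E)
          (measurable_discGreen z).enorm hp
    _ ≤ ENNReal.ofReal (A ^ p) *
          (lam S ^ (p - 1) * ∫⁻ ζ in S, ENNReal.ofReal B * ‖z - ζ‖ₑ ^ (-s) ∂lam) := by
        gcongr ENNReal.ofReal (A ^ p) * (lam ?_ ^ (p - 1) * ?_)
        exact (setLIntegral_mono' hE hpt).trans (lintegral_mono_set hS)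
    _ = _ := by
        rw [lintegral_const_mul _ (by fun_prop), ENNReal.ofReal_mul (p := A ^ p) (by positivity)]
        ring

lemma mul_abs_sub_le_norm_mul_exp_sub (hr : 0 ≤ r) {x y : ℝ} (hxy : |x - y| < π) :
    2 * r / π * |x - y| ≤ ‖(r : ℂ) * exp (x * I) - r * exp (y * I)‖ := by
  have hangle : InnerProductGeometry.angle (exp (x * I)) (exp (y * I)) = |x - y| := by
    rw [angle_exp_exp, (toIocMod_eq_self _).mpr]
    exact ⟨(abs_lt.mp hxy).1, by linarith [(abs_lt.mp hxy).2]⟩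
  have hchord := mul_angle_le_norm_sub (norm_exp_ofReal_mul_I x) (norm_exp_ofReal_mul_I y)
  rw [hangle] at hchord
  calc 2 * r / π * |x - y| = r * (2 / π * |x - y|) := by ring
    _ ≤ r * ‖exp (x * I) - exp (y * I)‖ := by gcongr
    _ = _ := by rw [← mul_sub, norm_mul, norm_real, Real.norm_of_nonneg hr]

lemma exists_mem_Icc_forall_mul_abs_sub_le (hr : 0 ≤ r) (hab : a ≤ b) (hba : b - a < π) (ζ : ℂ) :
    ∃ c ∈ Icc a b, ∀ x ∈ Icc a b, r / π * |x - c| ≤ ‖(r : ℂ) * exp (x * I) - ζ‖ := by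
  obtain ⟨c, hc, hmin⟩ := isCompact_Icc.exists_isMinOn (nonempty_Icc.mpr hab)
    (f := fun x : ℝ ↦ ‖(r : ℂ) * exp (x * I) - ζ‖) (by fun_prop)
  refine ⟨c, hc, fun x hx ↦ ?_⟩
  have hxc : |x - c| < π := abs_lt.mpr ⟨by linarith [hx.1, hc.2], by linarith [hx.2, hc.1]⟩
  have hchord := mul_abs_sub_le_norm_mul_exp_sub hr hxc
  have htri := norm_sub_le_norm_sub_add_norm_sub ((r : ℂ) * exp (x * I)) ζ (r * exp (c * I))
  rw [norm_sub_rev ζ] at htri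
  have hle : ‖(r : ℂ) * exp (c * I) - ζ‖ ≤ ‖(r : ℂ) * exp (x * I) - ζ‖ := hmin hx
  have hhalf : r / π * |x - c| = 2 * r / π * |x - c| / 2 := by ring
  linarith

lemma lintegral_Ioc_enorm_mul_exp_sub_rpow_neg_le (hr : 0 < r) (hab : a ≤ b) (hba : b - a < π)
    (hs₀ : 0 ≤ s) (hs : s < 1) (ζ : ℂ) :
    ∫⁻ x in Ioc a b, ‖(r : ℂ) * exp (x * I) - ζ‖ₑ ^ (-s) ≤
      ENNReal.ofReal ((π / r) ^ s * (2 / (1 - s) * (b - a) ^ (1 - s))) := by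
  obtain ⟨c, hc, hle⟩ := exists_mem_Icc_forall_mul_abs_sub_le hr.le hab hba ζ
  have hpt : ∀ x ∈ Ioc a b, ‖(r : ℂ) * exp (x * I) - ζ‖ₑ ^ (-s) ≤
      ENNReal.ofReal ((π / r) ^ s) * ‖x - c‖ₑ ^ (-s) := fun x hx ↦ by
    have hnorm : ENNReal.ofReal (r / π) * ‖x - c‖ₑ ≤ ‖(r : ℂ) * exp (x * I) - ζ‖ₑ := by
      rw [← ofReal_norm, ← ofReal_norm, ← ENNReal.ofReal_mul (by positivity)]
      exact ENNReal.ofReal_le_ofReal (hle x (Ioc_subset_Icc_self hx))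
    calc ‖(r : ℂ) * exp (x * I) - ζ‖ₑ ^ (-s) ≤ (ENNReal.ofReal (r / π) * ‖x - c‖ₑ) ^ (-s) :=
          by simp only [ENNReal.rpow_neg]; gcongr
      _ = ENNReal.ofReal ((π / r) ^ s) * ‖x - c‖ₑ ^ (-s) := by
        rw [ENNReal.mul_rpow_of_ne_top ENNReal.ofReal_ne_top enorm_ne_top,
          ENNReal.ofReal_rpow_of_pos (by positivity), Real.rpow_neg (by positivity),
          ← Real.inv_rpow (by positivity), inv_div]
  calc ∫⁻ x in Ioc a b, ‖(r : ℂ) * exp (x * I) - ζ‖ₑ ^ (-s)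
      ≤ ∫⁻ x in Ioc a b, ENNReal.ofReal ((π / r) ^ s) * ‖x - c‖ₑ ^ (-s) :=
        setLIntegral_mono' measurableSet_Ioc hpt
    _ = ENNReal.ofReal ((π / r) ^ s) * ∫⁻ x in Ioc a b, ‖x - c‖ₑ ^ (-s) :=
        lintegral_const_mul' _ _ ENNReal.ofReal_ne_top
    _ ≤ _ := by
        rw [ENNReal.ofReal_mul (by positivity)]
        gcongr
        exact lintegral_Ioc_enorm_sub_rpow_neg_le hs hc

lemma lintegral_Ioc_setLIntegral_enorm_mul_exp_sub_rpow_neg_le [SFinite lam] (hr : 0 < r)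
    (hab : a ≤ b) (hba : b - a < π) (hs₀ : 0 ≤ s) (hs : s < 1) (S : Set ℂ) :
    ∫⁻ x in Ioc a b, ∫⁻ ζ in S, ‖(r : ℂ) * exp (x * I) - ζ‖ₑ ^ (-s) ∂lam ≤
      ENNReal.ofReal ((π / r) ^ s * (2 / (1 - s) * (b - a) ^ (1 - s))) * lam S := by
  rw [lintegral_lintegral_swap (Measurable.aemeasurable (by fun_prop)), ← setLIntegral_const]
  exact lintegral_mono fun ζ ↦ lintegral_Ioc_enorm_mul_exp_sub_rpow_neg_le hr hab hba hs₀ hs ζ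

lemma lintegral_Ioc_setLIntegral_enorm_mul_exp_sub_rpow_neg_half_le [SFinite lam]
    (hr : r ∈ Ioo (1 / 2) 1) (hab : a ≤ b) (hba : b - a ≤ π * (1 - r) / 2) (S : Set ℂ) :
    ∫⁻ x in Ioc a b, ∫⁻ ζ in S, ‖(r : ℂ) * exp (x * I) - ζ‖ₑ ^ (-(1 / 2) : ℝ) ∂lam ≤
      ENNReal.ofReal (4 * π * (1 - r) ^ (1 / 2 : ℝ)) * lam S := by
  have hr₀ : 0 < r := by linarith [hr.1]
  have hr₁ : 0 < 1 - r := sub_pos.mpr hr.2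
  have hℓ : 0 ≤ b - a := sub_nonneg.mpr hab
  have hlt : b - a < π := by nlinarith [Real.pi_pos]
  have hsq : π / r * (b - a) ≤ π ^ 2 * (1 - r) := by
    rw [div_mul_eq_mul_div, div_le_iff₀ hr₀]
    calc π * (b - a) ≤ π * (π * (1 - r) / 2) := by gcongr
      _ = π ^ 2 * (1 - r) * (1 / 2) := by ring
      _ ≤ π ^ 2 * (1 - r) * r := by gcongr; exact hr.1.le
  refine (lintegral_Ioc_setLIntegral_enorm_mul_exp_sub_rpow_neg_le (s := 1 / 2) hr₀ hab hlt
    (by norm_num) (by norm_num) S).trans ?_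
  gcongr ENNReal.ofReal ?_ * _
  calc (π / r) ^ (1 / 2 : ℝ) * (2 / (1 - 1 / 2) * (b - a) ^ (1 - 1 / 2 : ℝ))
      = 4 * (π / r * (b - a)) ^ (1 / 2 : ℝ) := by
        rw [sub_half, Real.mul_rpow (by positivity) hℓ]; ring
    _ ≤ 4 * (π ^ 2 * (1 - r)) ^ (1 / 2 : ℝ) := by gcongr
    _ = 4 * π * (1 - r) ^ (1 / 2 : ℝ) := by
        rw [Real.mul_rpow (by positivity) hr₁.le, ← Real.sqrt_eq_rpow (π ^ 2),
          Real.sqrt_sq Real.pi_pos.le, mul_assoc]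

lemma enorm_localGreenPotential_rpow_le_carlesonBox (h : IsDiscWeighted μ lam) (hp : 1 ≤ p)
    (hr : r ∈ Ioo (1 / 2) 1) {φ ψ : ℝ} (hψ : |φ - ψ| ≤ π * (1 - r) / 2) :
    ‖localGreenPotential μ (1 / 7) (r * exp (φ * I))‖ₑ ^ p ≤
      ENNReal.ofReal ((7 / 3) ^ (1 / 2 : ℝ) * (49 / 6 * p) ^ p * (1 - r) ^ (1 / 2 - p)) *
        (lam (carlesonBox ψ (4 / 3 * (1 - r))) ^ (p - 1) *
          ∫⁻ ζ in carlesonBox ψ (4 / 3 * (1 - r)),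
            ‖(r : ℂ) * exp (φ * I) - ζ‖ₑ ^ (-(1 / 2) : ℝ) ∂lam) := by
  have hr₁ : 0 < 1 - r := sub_pos.mpr hr.2
  have hz := norm_ofReal_mul_exp_mul_I (by linarith [hr.1] : 0 ≤ r) φ
  have hconst : (4 / ((1 - (1 / 7) ^ 2) * (1 - r))) ^ p *
      ((p / (1 / 2)) ^ p * (2 / (1 - 1 / 7) * (1 - r)) ^ (1 / 2 : ℝ)) =
      (7 / 3) ^ (1 / 2 : ℝ) * (49 / 6 * p) ^ p * (1 - r) ^ (1 / 2 - p) := by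
    have hbase : 4 / ((1 - (1 / 7) ^ 2) * (1 - r)) * (p / (1 / 2)) = 49 / 6 * p / (1 - r) := by
      field_simp; norm_num
    rw [← mul_assoc, ← Real.mul_rpow (by positivity) (by positivity), hbase,
      Real.div_rpow (by positivity) hr₁.le, Real.mul_rpow (by norm_num) hr₁.le, Real.rpow_sub hr₁]
    norm_num
    ring
  have hbound := enorm_localGreenPotential_rpow_le (s := 1 / 2) h (hz.trans_lt hr.2) (by norm_num)
    (by norm_num) hp (by norm_num) (pseudoDisc_inter_ball_subset_carlesonBox hr.1 hr.2 hψ)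
  rwa [hz, hconst] at hbound

lemma lintegral_Ioc_enorm_localGreenPotential_rpow_le [SFinite lam] (h : IsDiscWeighted μ lam)
    (hp : 1 ≤ p) (hr : r ∈ Ioo (1 / 2) 1) (hab : a ≤ b) (hba : b - a ≤ π * (1 - r) / 2) {ψ : ℝ}
    (hψ : ψ ∈ Ioc a b) :
    ∫⁻ φ in Ioc a b, ‖localGreenPotential μ (1 / 7) (r * exp (φ * I))‖ₑ ^ p ≤
      ENNReal.ofReal (4 * π * (7 / 3) ^ (1 / 2 : ℝ) * (49 / 6 * p) ^ p * (1 - r) ^ (1 - p)) *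
        lam (carlesonBox ψ (4 / 3 * (1 - r))) ^ p := by
  have hr₁ : 0 < 1 - r := sub_pos.mpr hr.2
  set S := carlesonBox ψ (4 / 3 * (1 - r))
  set c := (7 / 3) ^ (1 / 2 : ℝ) * (49 / 6 * p) ^ p * (1 - r) ^ (1 / 2 - p)
  have hmeas : Measurable fun φ : ℝ ↦
      ∫⁻ ζ in S, ‖(r : ℂ) * exp (φ * I) - ζ‖ₑ ^ (-(1 / 2) : ℝ) ∂lam :=
    Measurable.lintegral_prod_right (by fun_prop)
  calc ∫⁻ φ in Ioc a b, ‖localGreenPotential μ (1 / 7) (r * exp (φ * I))‖ₑ ^ p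
      ≤ ENNReal.ofReal c * (lam S ^ (p - 1) * ∫⁻ φ in Ioc a b, ∫⁻ ζ in S,
          ‖(r : ℂ) * exp (φ * I) - ζ‖ₑ ^ (-(1 / 2) : ℝ) ∂lam) := by
        rw [← lintegral_const_mul _ hmeas, ← lintegral_const_mul _ (hmeas.const_mul _)]
        exact setLIntegral_mono' measurableSet_Ioc fun φ hφ ↦
          enorm_localGreenPotential_rpow_le_carlesonBox h hp hr
            (abs_le.mpr ⟨by linarith [hφ.1, hψ.2], by linarith [hφ.2, hψ.1]⟩)
    _ ≤ ENNReal.ofReal c * (lam S ^ (p - 1) *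
          (ENNReal.ofReal (4 * π * (1 - r) ^ (1 / 2 : ℝ)) * lam S)) := by
        gcongr
        exact lintegral_Ioc_setLIntegral_enorm_mul_exp_sub_rpow_neg_half_le hr hab hba S
    _ = ENNReal.ofReal (c * (4 * π * (1 - r) ^ (1 / 2 : ℝ))) * lam S ^ p := by
        have hpow := ENNReal.rpow_add_of_nonneg (x := lam S) (p - 1) 1 (by linarith) one_pos.le
        rw [sub_add_cancel, ENNReal.rpow_one] at hpow
        rw [hpow, ENNReal.ofReal_mul (p := c) (by positivity)]
        ring
    _ = _ := by
        have hpow : (1 - r) ^ (1 - p) = (1 - r) ^ (1 / 2 - p) * (1 - r) ^ (1 / 2 : ℝ) := by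
          rw [← Real.rpow_add hr₁]; ring_nf
        congr 2
        rw [hpow]
        ring

lemma lintegral_enorm_localGreenPotential_rpow_le [SFinite lam] (h : IsDiscWeighted μ lam)
    (hp : 1 ≤ p) (hr : r ∈ Ioo (1 / 2) 1) :
    ∫⁻ φ in Ioc 0 (2 * π), ‖localGreenPotential μ (1 / 7) (r * exp (φ * I))‖ₑ ^ p ≤
      ENNReal.ofReal (16 * (7 / 3) ^ (1 / 2 : ℝ) * (49 / 6 * p) ^ p * (1 - r) ^ (-p)) *
        ∫⁻ φ in Ioc 0 (2 * π), lam (carlesonBox φ (4 / 3 * (1 - r))) ^ p := by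
  have hr₁ : 0 < 1 - r := sub_pos.mpr hr.2
  refine (setLIntegral_Ioc_zero_le_of_forall_sub_le (h := π * (1 - r) / 2) (by positivity)
    (by nlinarith [Real.pi_pos, hr.1]) ENNReal.ofReal_ne_top fun a b hab hba ψ hψ ↦
      lintegral_Ioc_enorm_localGreenPotential_rpow_le h hp hr hab hba hψ).trans_eq ?_
  have hpow : (1 - r) ^ (1 - p) = (1 - r) * (1 - r) ^ (-p) := by
    rw [Real.rpow_sub hr₁, Real.rpow_one, Real.rpow_neg hr₁.le, div_eq_mul_inv]
  rw [← ENNReal.ofReal_mul (by positivity), hpow]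
  congr 2
  field_simp
  norm_num

lemma integral_abs_localGreenPotential_rpow_le [IsFiniteMeasure lam] (h : IsDiscWeighted μ lam)
    (hp : 1 ≤ p) (hr : r ∈ Ioo (1 / 2) 1) :
    ∫ φ in (0 : ℝ)..2 * π, |localGreenPotential μ (1 / 7) (r * exp (φ * I))| ^ p ≤
      16 * (7 / 3) ^ (1 / 2 : ℝ) * (49 / 6 * p) ^ p * (1 - r) ^ (-p) *
        ∫ φ in (0 : ℝ)..2 * π, (lam (carlesonBox φ (4 / 3 * (1 - r)))).toReal ^ p := by
  have hp₀ : 0 ≤ p := by linarith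
  have hr₁ : 0 < 1 - r := sub_pos.mpr hr.2
  have hnonneg : 0 ≤ ∫ φ in (0 : ℝ)..2 * π, (lam (carlesonBox φ (4 / 3 * (1 - r)))).toReal ^ p :=
    intervalIntegral.integral_nonneg Real.two_pi_pos.le fun _ _ ↦ by positivity
  rw [← ENNReal.ofReal_le_ofReal_iff (by positivity), ENNReal.ofReal_mul (by positivity),
    ← lintegral_rpow_eq_ofReal_intervalIntegral
      (measurable_measure_carlesonBox (by linarith [hr.1]) lam) (measure_ne_top lam univ)
      (fun _ ↦ measure_mono (subset_univ _)) Real.two_pi_pos.le hp₀]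
  exact (ofReal_intervalIntegral_abs_rpow_le Real.two_pi_pos.le hp₀).trans
    (lintegral_enorm_localGreenPotential_rpow_le h hp hr)

end GreenPotential

theorem stmt19_general (p γ : ℝ) (hp : 1 ≤ p) :
    ∃ C : ℝ, 0 < C ∧ ∀ (μ lam : Measure ℂ), IsFiniteMeasure lam → IsDiscWeighted μ lam →
      ∀ M : ℝ,
      (∀ δ ∈ Ioo (0 : ℝ) 1,
        (∫ φ in (0 : ℝ)..2 * π, (lam (carlesonBox φ δ)).toReal ^ p) ^ (1 / p) ≤ M * δ ^ γ) →
      ∀ r ∈ Ioo (1 / 2 : ℝ) 1,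
        (∫ φ in (0 : ℝ)..2 * π,
          |localGreenPotential μ (1 / 7) (r * exp (φ * I))| ^ p) ^ (1 / p) ≤
            C * M * (1 - r) ^ (γ - 1) := by
  have hp₀ : 0 < p := by linarith
  set K := 16 * (7 / 3) ^ (1 / 2 : ℝ) * (49 / 6 * p) ^ p
  refine ⟨K ^ (1 / p) * (4 / 3) ^ γ, by positivity, fun μ lam _ h M hM r hr ↦ ?_⟩
  have hr₁ : 0 < 1 - r := sub_pos.mpr hr.2
  set J := ∫ φ in (0 : ℝ)..2 * π, (lam (carlesonBox φ (4 / 3 * (1 - r)))).toReal ^ p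
  have hJ : 0 ≤ J :=
    intervalIntegral.integral_nonneg Real.two_pi_pos.le fun _ _ ↦ by positivity
  have hu : 0 ≤ ∫ φ in (0 : ℝ)..2 * π,
      |localGreenPotential μ (1 / 7) (r * exp (φ * I))| ^ p :=
    intervalIntegral.integral_nonneg Real.two_pi_pos.le fun _ _ ↦ by positivity
  calc (∫ φ in (0 : ℝ)..2 * π, |localGreenPotential μ (1 / 7) (r * exp (φ * I))| ^ p) ^ (1 / p)
      ≤ (K * (1 - r) ^ (-p) * J) ^ (1 / p) := by
        gcongr; exact integral_abs_localGreenPotential_rpow_le h hp hr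
    _ = K ^ (1 / p) * (1 - r) ^ (-1 : ℝ) * J ^ (1 / p) := by
        rw [Real.mul_rpow (by positivity) hJ, Real.mul_rpow (by positivity) (by positivity),
          ← Real.rpow_mul hr₁.le, neg_mul, mul_one_div_cancel hp₀.ne']
    _ ≤ K ^ (1 / p) * (1 - r) ^ (-1 : ℝ) * (M * (4 / 3 * (1 - r)) ^ γ) := by
        gcongr; exact hM _ ⟨by positivity, by linarith [hr.1]⟩
    _ = K ^ (1 / p) * (4 / 3) ^ γ * M * (1 - r) ^ (γ - 1) := by
        rw [Real.mul_rpow (by norm_num) hr₁.le, sub_eq_add_neg γ, Real.rpow_add hr₁]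
        ring

/-- For `p ∈ (1,∞)`, `γ ∈ (0,1]` there is `C = C(p,γ) > 0` such that
for every finite positive Borel measure `λ` on the closed disc with
`dλ = (1-|ζ|)dμ` on `𝔻` and `(∫₀^{2π} λ(C(φ,δ))^p dφ)^{1/p} ≤ M·δ^γ` for all
`δ ∈ (0,1)`, the function
`u₁(re^{iφ}) = ∫_{D*(re^{iφ},1/7)} log|(1-re^{iφ}·conj ζ)/(re^{iφ}-ζ)| dμ(ζ)`
satisfies `(∫₀^{2π} |u₁(re^{iφ})|^p dφ)^{1/p} ≤ C·M·(1-r)^{γ-1}` for `r ∈ (1/2,1)`. -/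
theorem stmt19 (p γ : ℝ) (hp : 1 < p) (hγ : 0 < γ) (hγ1 : γ ≤ 1) :
    ∃ C : ℝ, 0 < C ∧ ∀ (μ lam : Measure ℂ), IsFiniteMeasure lam →
      lam (Metric.closedBall (0 : ℂ) 1)ᶜ = 0 →
      (∀ M : Set ℂ, MeasurableSet M → M ⊆ Metric.ball (0 : ℂ) 1 →
        lam M = ∫⁻ ζ in M, ENNReal.ofReal (1 - ‖ζ‖) ∂μ) →
      ∀ M : ℝ, 0 < M →
      (∀ δ ∈ Set.Ioo (0 : ℝ) 1,
        (∫ φ in (0 : ℝ)..(2 * Real.pi), (lam (carlesonBox φ δ)).toReal ^ p) ^ (1 / p) ≤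
          M * δ ^ γ) →
      ∀ r ∈ Set.Ioo (1 / 2 : ℝ) 1,
        (∫ φ in (0 : ℝ)..(2 * Real.pi),
            |∫ ζ in pseudoDisc ((r : ℂ) * Complex.exp (φ * Complex.I)) (1 / 7),
              Real.log (‖
                (1 - (r : ℂ) * Complex.exp (φ * Complex.I) * (starRingEnd ℂ) ζ) /
                  ((r : ℂ) * Complex.exp (φ * Complex.I) - ζ)‖) ∂μ| ^ p) ^ (1 / p) ≤
          C * M * (1 - r) ^ (γ - 1) := by
  obtain ⟨C, hC, h⟩ := stmt19_general p γ hp.le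
  exact ⟨C, hC, fun μ lam hfin _ hlam M _ ↦ h μ lam hfin hlam M⟩
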